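/- Let Γ be a terminal DG game and let (u,a) ∈ E be a move with a ∈ T such that a is the ≻_{i(u)}-best outcome in A = T ∪ {∞} (a #1-move). Let Γ' be the DG game obtained from Γ by deleting all moves leaving u other than (u,a). Then every terminal Nash equilibrium of Γ' is also a terminal Nash equilibrium of Γ. -/

import Mathlib

/-!
Deleting the moves `(u, y)` with `y ≠ a` changes neither the terminals nor the outcome of any
situation. The equilibrium `σ` of `Γ'` has `σ u = a`, so only deviations `σ'` of the owner of `u`
with `σ' u ≠ a` are new in `Γ`. Redirect such a `σ'` at `u` to `a`; the result `τ` is a deviation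
available in `Γ'`, hence not improving. If the play of `σ'` avoids `u`, then `σ'` has the outcome
of `τ`. If it visits `u`, then `τ` has outcome `a`, so `σ` already yields `a`, the best outcome for
the owner of `u`, and `σ'` cannot improve on it.
-/

open Classical

/-- A deterministic graphical (DG) game on vertex (position) set `V` with player set `ι`.
`adj` is the move relation of the digraph; terminals are exactly the vertices of
out-degree `0`.  `owner x` is the player controlling position `x` (irrelevant for
terminals), `init` is the initial position, and `pref i x y` means that player `i`
strictly prefers outcome `x` to outcome `y`, where outcomes are encoded as
`Option V`: `some t` for a terminal `t` and `none` for the infinite outcome `∞`. -/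
structure DGGame (V : Type*) (ι : Type*) where
  adj : V → V → Prop
  owner : V → ι
  init : V
  pref : ι → Option V → Option V → Prop

namespace DGGame

variable {V ι : Type*} (Γ : DGGame V ι)

/-- A terminal position: no outgoing moves. -/
def Terminal (x : V) : Prop := ∀ y, ¬ Γ.adj x y

/-- The set of outcomes `A = T ∪ {∞}`. -/
def OutcomeSet : Set (Option V) := {x | x = none ∨ ∃ t, Γ.Terminal t ∧ x = some t}

/-- The preferences of each player form a strict linear order on the outcome set. -/
def PrefOrder : Prop :=
  ∀ i : ι,
    (∀ x ∈ Γ.OutcomeSet, ¬ Γ.pref i x x) ∧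
    (∀ x ∈ Γ.OutcomeSet, ∀ y ∈ Γ.OutcomeSet, ∀ z ∈ Γ.OutcomeSet,
        Γ.pref i x y → Γ.pref i y z → Γ.pref i x z) ∧
    (∀ x ∈ Γ.OutcomeSet, ∀ y ∈ Γ.OutcomeSet, x ≠ y → Γ.pref i x y ∨ Γ.pref i y x)

/-- One step of the play determined by a situation `σ` (stays put at terminals). -/
noncomputable def step (σ : V → V) (x : V) : V :=
  if Γ.Terminal x then x else σ x

/-- The position reached after `n` moves of the play starting at the initial position. -/
noncomputable def iter (σ : V → V) (n : ℕ) : V := (Γ.step σ)^[n] Γ.init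

/-- The outcome `g(σ)` of a situation: the terminal at which the play from the initial
position ends, or `none` (i.e. `∞`) if the play is infinite. -/
noncomputable def outcome (σ : V → V) : Option V :=
  if h : ∃ n, Γ.Terminal (Γ.iter σ n) then some (Γ.iter σ (Nat.find h)) else none

/-- A situation: a choice, for every non-terminal position, of a move from it.
(Values at terminal positions are irrelevant.) -/
def IsSituation (σ : V → V) : Prop := ∀ x, ¬ Γ.Terminal x → Γ.adj x (σ x)

/-- Nash equilibrium in pure stationary strategies: no player `i` can obtain a strictly
better outcome by changing his own moves only. -/
def IsNE (σ : V → V) : Prop :=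
  Γ.IsSituation σ ∧
  ∀ (i : ι) (σ' : V → V), Γ.IsSituation σ' →
    (∀ x, Γ.owner x ≠ i → σ' x = σ x) →
    ¬ Γ.pref i (Γ.outcome σ') (Γ.outcome σ)

/-- A terminal Nash equilibrium: a NE whose outcome is a terminal. -/
def IsTerminalNE (σ : V → V) : Prop := Γ.IsNE σ ∧ ∃ t, Γ.outcome σ = some t

/-- A non-terminal Nash equilibrium: a NE whose outcome is `∞`. -/
def IsNonterminalNE (σ : V → V) : Prop := Γ.IsNE σ ∧ Γ.outcome σ = none

/-- A terminal DG game: every player prefers every terminal outcome to `∞`. -/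
def TerminalGame : Prop := ∀ (i : ι) (t : V), Γ.Terminal t → Γ.pref i (some t) none

/-- A play-once DG game: every player controls exactly one position. -/
def PlayOnce : Prop := ∀ i : ι, {x | ¬ Γ.Terminal x ∧ Γ.owner x = i}.ncard = 1

/-- Reachability by a directed path. -/
def Reaches (x y : V) : Prop := Relation.ReflTransGen Γ.adj x y

end DGGame

namespace DGGame

variable {V ι : Type*} (Γ : DGGame V ι)

theorem iter_succ (σ : V → V) (n : ℕ) : Γ.iter σ (n + 1) = Γ.step σ (Γ.iter σ n) :=
  Function.iterate_succ_apply' _ _ _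

variable {Γ} {σ τ : V → V} {u a : V}

theorem iter_eq_of_terminal_of_le {m n : ℕ} (hm : Γ.Terminal (Γ.iter σ m)) (hmn : m ≤ n) :
    Γ.iter σ n = Γ.iter σ m := by
  obtain ⟨k, rfl⟩ := Nat.exists_eq_add_of_le' hmn
  have hfixed : Γ.step σ (Γ.iter σ m) = Γ.iter σ m := if_pos hm
  exact (Function.iterate_add_apply _ k m _).trans (Function.iterate_fixed hfixed k)

theorem outcome_eq_some_iff {t : V} :
    Γ.outcome σ = some t ↔ Γ.Terminal t ∧ ∃ n, Γ.iter σ n = t := by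
  constructor
  · intro h
    unfold outcome at h
    split at h
    case isTrue hex =>
      cases h
      exact ⟨Nat.find_spec hex, _, rfl⟩
    case isFalse => contradiction
  · rintro ⟨ht, n, rfl⟩
    have hex : ∃ n, Γ.Terminal (Γ.iter σ n) := ⟨n, ht⟩
    rw [outcome, dif_pos hex,
      iter_eq_of_terminal_of_le (Nat.find_spec hex) (Nat.find_min' hex ht)]

variable (Γ σ) in
theorem outcome_mem_outcomeSet : Γ.outcome σ ∈ Γ.OutcomeSet := by
  cases h : Γ.outcome σ with
  | none => exact Or.inl rfl
  | some t => exact Or.inr ⟨t, (outcome_eq_some_iff.1 h).1, rfl⟩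

theorem outcome_congr {Γ' : DGGame V ι} (hterminal : ∀ x, Γ.Terminal x ↔ Γ'.Terminal x)
    (hiter : ∀ n, Γ.iter σ n = Γ'.iter τ n) : Γ.outcome σ = Γ'.outcome τ :=
  Option.ext fun t => by simp only [outcome_eq_some_iff, hterminal, hiter]

theorem IsSituation.update (hσ : Γ.IsSituation σ) (hua : Γ.adj u a) :
    Γ.IsSituation (Function.update σ u a) := by
  intro x hx
  obtain rfl | hxu := eq_or_ne x u
  · rwa [Function.update_self]
  · rw [Function.update_of_ne hxu]
    exact hσ x hx

theorem iter_update_of_forall_lt_ne {n : ℕ} (h : ∀ m < n, Γ.iter σ m ≠ u) :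
    Γ.iter (Function.update σ u a) n = Γ.iter σ n := by
  induction n with
  | zero => rfl
  | succ n ih =>
    rw [iter_succ, iter_succ, ih fun m hm => h m (hm.trans n.lt_succ_self), step, step,
      Function.update_of_ne (h n n.lt_succ_self)]

theorem outcome_update_of_forall_ne (h : ∀ n, Γ.iter σ n ≠ u) :
    Γ.outcome (Function.update σ u a) = Γ.outcome σ :=
  outcome_congr (fun _ => Iff.rfl) fun _ => iter_update_of_forall_lt_ne fun m _ => h m

theorem outcome_update_of_exists_eq (hu : ¬ Γ.Terminal u) (ha : Γ.Terminal a)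
    (h : ∃ n, Γ.iter σ n = u) : Γ.outcome (Function.update σ u a) = some a := by
  have hfirst : Γ.iter (Function.update σ u a) (Nat.find h) = u :=
    (iter_update_of_forall_lt_ne fun _ => Nat.find_min h).trans (Nat.find_spec h)
  refine outcome_eq_some_iff.2 ⟨ha, Nat.find h + 1, ?_⟩
  rw [iter_succ, hfirst, step, if_neg hu, Function.update_self]

theorem outcome_update_eq_or_eq_some (hu : ¬ Γ.Terminal u) (ha : Γ.Terminal a) :
    Γ.outcome (Function.update σ u a) = Γ.outcome σ ∨
      Γ.outcome (Function.update σ u a) = some a := by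
  by_cases h : ∃ n, Γ.iter σ n = u
  · exact Or.inr (outcome_update_of_exists_eq hu ha h)
  · exact Or.inl (outcome_update_of_forall_ne (not_exists.1 h))

theorem PrefOrder.not_pref_of_forall_pref (hΓ : Γ.PrefOrder) {i : ι} {x : Option V}
    (hx : x ∈ Γ.OutcomeSet) (hbest : ∀ y ∈ Γ.OutcomeSet, y ≠ x → Γ.pref i x y) :
    ∀ y ∈ Γ.OutcomeSet, ¬ Γ.pref i y x := by
  obtain ⟨hirrefl, htrans, -⟩ := hΓ i
  intro y hy hyx
  have hne : y ≠ x := fun h => hirrefl x hx (h ▸ hyx)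
  exact hirrefl x hx (htrans x hx y hy x hx (hbest y hy hne) hyx)

variable (Γ u a) in
/-- The game `Γ'` obtained from `Γ` by deleting all moves leaving `u` other than `(u, a)`. The move
`(u, a)` is not added if `Γ` lacks it, and `u` is then a terminal of `Γ'`. -/
def restrictMove : DGGame V ι :=
  { Γ with adj := fun x y => Γ.adj x y ∧ (x = u → y = a) }

theorem terminal_restrictMove_iff (hua : Γ.adj u a) {x : V} :
    (Γ.restrictMove u a).Terminal x ↔ Γ.Terminal x := by
  refine ⟨fun h y hxy => ?_, fun h y hxy => h y hxy.1⟩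
  obtain rfl | hxu := eq_or_ne x u
  · exact h a ⟨hua, fun _ => rfl⟩
  · exact h y ⟨hxy, fun hx => absurd hx hxu⟩

theorem outcome_restrictMove (hua : Γ.adj u a) (σ : V → V) :
    (Γ.restrictMove u a).outcome σ = Γ.outcome σ := by
  have hstep : (Γ.restrictMove u a).step σ = Γ.step σ :=
    funext fun x => by simp only [step, terminal_restrictMove_iff hua]
  refine outcome_congr (fun _ => terminal_restrictMove_iff hua) fun n => ?_
  rw [iter, hstep]
  rfl

theorem isSituation_restrictMove_iff (hua : Γ.adj u a) :
    (Γ.restrictMove u a).IsSituation σ ↔ Γ.IsSituation σ ∧ σ u = a := by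
  simp only [IsSituation, terminal_restrictMove_iff hua]
  constructor
  · intro h
    exact ⟨fun x hx => (h x hx).1, (h u fun hu => hu a hua).2 rfl⟩
  · rintro ⟨h, hσu⟩ x hx
    exact ⟨h x hx, fun hxu => hxu ▸ hσu⟩

theorem IsNE.not_pref_outcome_update (hσ : (Γ.restrictMove u a).IsNE σ) (hua : Γ.adj u a)
    {i : ι} {σ' : V → V} (hσ' : Γ.IsSituation σ') (hdev : ∀ x, Γ.owner x ≠ i → σ' x = σ x) :
    ¬ Γ.pref i (Γ.outcome (Function.update σ' u a)) (Γ.outcome σ) := by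
  have hσu : σ u = a := ((isSituation_restrictMove_iff hua).1 hσ.1).2
  have hsit : (Γ.restrictMove u a).IsSituation (Function.update σ' u a) :=
    (isSituation_restrictMove_iff hua).2 ⟨hσ'.update hua, Function.update_self ..⟩
  have hdev_update (x : V) (hx : Γ.owner x ≠ i) : Function.update σ' u a x = σ x := by
    obtain rfl | hxu := eq_or_ne x u
    · rw [Function.update_self, hσu]
    · rw [Function.update_of_ne hxu, hdev x hx]
  rw [← outcome_restrictMove hua, ← outcome_restrictMove hua σ]
  exact hσ.2 i _ hsit hdev_update

end DGGame

open DGGame in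
theorem stmt8_general {V ι : Type*} {Γ : DGGame V ι} {u a : V} (hmove : Γ.adj u a)
    (hat : Γ.Terminal a)
    (hbest : ∀ x ∈ Γ.OutcomeSet, x ≠ some a → Γ.pref (Γ.owner u) (some a) x)
    (hmax : ∀ x ∈ Γ.OutcomeSet, ¬ Γ.pref (Γ.owner u) x (some a))
    {σ : V → V} (hσ : (Γ.restrictMove u a).IsNE σ) : Γ.IsNE σ := by
  obtain ⟨hsit, hσu⟩ := (isSituation_restrictMove_iff hmove).1 hσ.1
  refine ⟨hsit, fun i σ' hσ' hdev => ?_⟩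
  have hnot := hσ.not_pref_outcome_update hmove hσ' hdev
  by_cases hsame : Γ.outcome (Function.update σ' u a) = Γ.outcome σ'
  · rwa [hsame] at hnot
  have hupdate : Γ.outcome (Function.update σ' u a) = some a :=
    (outcome_update_eq_or_eq_some (fun hu => hu a hmove) hat).resolve_left hsame
  obtain rfl : Γ.owner u = i := by
    by_contra hi
    exact hsame (by rw [Function.update_eq_self_iff.2 ((hdev u hi).trans hσu).symm])
  have hσa : Γ.outcome σ = some a := by
    by_contra hne
    exact hnot (hupdate ▸ hbest _ (Γ.outcome_mem_outcomeSet σ) hne)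
  rw [hσa]
  exact hmax _ (Γ.outcome_mem_outcomeSet σ')

/-- Let `Γ` be a terminal DG game and `(u,a) ∈ E` a move with `a` a terminal that is
the `≻_{i(u)}`-best outcome in `A = T ∪ {∞}` (a `#1`-move).  Let `Γ'` be obtained
from `Γ` by deleting all moves leaving `u` other than `(u,a)`.  Then every terminal
Nash equilibrium of `Γ'` is also a terminal Nash equilibrium of `Γ`. -/
theorem stmt8 {V ι : Type*} [Finite V] (Γ : DGGame V ι)
    (hinit : ¬ Γ.Terminal Γ.init) (hpref : Γ.PrefOrder)
    (hterm : Γ.TerminalGame)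
    (u a : V) (hmove : Γ.adj u a) (hat : Γ.Terminal a)
    (hbest : ∀ x ∈ Γ.OutcomeSet, x ≠ some a → Γ.pref (Γ.owner u) (some a) x)
    (Γ' : DGGame V ι)
    (hΓ' : Γ' = { Γ with adj := fun x y => Γ.adj x y ∧ (x = u → y = a) }) :
    ∀ σ : V → V, Γ'.IsTerminalNE σ → Γ.IsTerminalNE σ := by
  subst hΓ'
  have hmax := hpref.not_pref_of_forall_pref (Or.inr ⟨a, hat, rfl⟩) hbest
  exact fun σ ⟨hσ, hσt⟩ =>
    ⟨stmt8_general hmove hat hbest hmax hσ, DGGame.outcome_restrictMove hmove σ ▸ hσt⟩
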